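/- Let M be a C-minimal, definably maximal structure, F = {f_u : u ∈ U} a nice family of functions with domain V and absorbing element e, and g : V → V a definable function with g(e) = e which is derivable relative to F. Then ψ_{F,g} is defined on W∖{e} for some cone W containing e, and for u₁ ∈ U: f_{u₁} ∼ g if and only if lim_{x→e} ψ_{F,g}(x) = u₁. -/

import Mathlib

open FirstOrder Set

universe u

namespace CMinPaper

variable {M : Type u}

/-- The axioms of a (dense) C-relation. -/
def IsCRelation (C : M → M → M → Prop) : Prop :=
  (∀ x y z, C x y z → C x z y) ∧
  (∀ x y z, C x y z → ¬ C y x z) ∧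
  (∀ x y z w, C x y z → C x w z ∨ C w y z) ∧
  (∀ x y, x ≠ y → ∃ z, z ≠ y ∧ C x y z)

/-- A cone (open ball). -/
def IsCone (C : M → M → M → Prop) (s : Set M) : Prop :=
  ∃ a b : M, a ≠ b ∧ s = {x | C a x b}

/-- A 0-level set (closed ball). -/
def IsClosedBall (C : M → M → M → Prop) (s : Set M) : Prop :=
  ∃ a b : M, s = {x | ¬ C x a b}

/-- A ball is a cone or a closed ball. -/
def IsBall (C : M → M → M → Prop) (s : Set M) : Prop :=
  IsCone C s ∨ IsClosedBall C s

/-- The node `a ∧ b` of the underlying tree, viewed as the closed ball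
`{z | ¬ C z a b}` of `M` it determines. -/
def node (C : M → M → M → Prop) (a b : M) : Set M := {x | ¬ C x a b}

/-- `Δ(x,y,z)`. -/
def Delta (C : M → M → M → Prop) (x y z : M) : Prop := ¬ C x y z ∧ ¬ C y x z

/-- The (unary) sets which are definable by a quantifier-free formula with
parameters using only `C` and equality.  A term is either the variable
(`Option.none`) or a parameter (`Option.some a`). -/
inductive QFDef (C : M → M → M → Prop) : Set M → Prop
  | atomC (t₁ t₂ t₃ : Option M) :
      QFDef C {x | C (t₁.getD x) (t₂.getD x) (t₃.getD x)}
  | atomEq (t₁ t₂ : Option M) : QFDef C {x | t₁.getD x = t₂.getD x}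
  | compl {s : Set M} : QFDef C s → QFDef C sᶜ
  | union {s t : Set M} : QFDef C s → QFDef C t → QFDef C (s ∪ t)

/-- The ternary relation interpreting the symbol `r`. -/
def interpC (L : FirstOrder.Language.{u, u}) (M : Type u) [L.Structure M]
    (r : L.Relations 3) : M → M → M → Prop :=
  fun a b c => Language.Structure.RelMap r ![a, b, c]

/-- `M` is C-minimal: in every elementarily equivalent structure, every
definable (with parameters) subset is quantifier-free definable using only
`C` and `=`. -/
def CMinimal (L : FirstOrder.Language.{u, u}) (M : Type u) [L.Structure M]
    (r : L.Relations 3) : Prop :=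
  ∀ (N : Type u) (SN : L.Structure N),
    letI := SN
    L.ElementarilyEquivalent M N →
      ∀ s : Set N, Set.Definable₁ (univ : Set N) L s → QFDef (interpC L N r) s

/-- The (model-theoretic) algebraic closure of a set of parameters. -/
def acl (L : FirstOrder.Language.{u, u}) (M : Type u) [L.Structure M] (A : Set M) : Set M :=
  {a | ∃ s : Set M, Set.Definable₁ A L s ∧ s.Finite ∧ a ∈ s}

/-- The Steinitz exchange property for the algebraic closure. -/
def HasExchange (L : FirstOrder.Language.{u, u}) (M : Type u) [L.Structure M] : Prop :=
  ∀ (A : Set M) (a b : M),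
    a ∈ acl L M (A ∪ {b}) → a ∉ acl L M A → b ∈ acl L M (A ∪ {a})

/-- `M` is geometric: acl has the exchange property in every elementarily
equivalent structure. -/
def Geometric (L : FirstOrder.Language.{u, u}) (M : Type u) [L.Structure M] : Prop :=
  ∀ (N : Type u) (SN : L.Structure N),
    letI := SN
    L.ElementarilyEquivalent M N → HasExchange L N

/-- `M` is trivial: in every elementarily equivalent structure the pregeometry
given by acl is trivial. -/
def TrivialGeometry (L : FirstOrder.Language.{u, u}) (M : Type u) [L.Structure M] : Prop :=
  ∀ (N : Type u) (SN : L.Structure N),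
    letI := SN
    L.ElementarilyEquivalent M N →
      ∀ A : Set N, acl L N A = ⋃ a ∈ A, acl L N {a}

/-- `M` is definably maximal: every definable family of cones which is linearly
ordered by inclusion has a non-empty intersection. -/
def DefinablyMaximal (L : FirstOrder.Language.{u, u}) (M : Type u) [L.Structure M]
    (r : L.Relations 3) : Prop :=
  ∀ (n : ℕ) (S : Set (Fin (n + 1) → M)) (P : Set (Fin n → M)),
    Set.Definable (univ : Set M) L S →
    (∀ p ∈ P, IsCone (interpC L M r) {x | Fin.snoc p x ∈ S}) →
    (∀ p ∈ P, ∀ q ∈ P,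
      {x | Fin.snoc p x ∈ S} ⊆ {x | Fin.snoc q x ∈ S} ∨
        {x | Fin.snoc q x ∈ S} ⊆ {x | Fin.snoc p x ∈ S}) →
    P.Nonempty → (⋂ p ∈ P, {x | Fin.snoc p x ∈ S}).Nonempty

/-- Leaves of the underlying tree are the singletons. -/
def IsLeafSet (s : Set M) : Prop := ∃ x : M, s = {x}

/-- The interval `(lo, hi)` of the branch `br c`, consisting of all nodes
(coded as the closed balls they determine) strictly between the endpoints.
`lo = none` denotes `-∞`; `lo = some p` denotes the node `c ∧ p`; `hi : M`
denotes the node `c ∧ hi` (the leaf `c` when `hi = c`).  The tree ordering is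
reverse inclusion of balls. -/
def branchInterval (C : M → M → M → Prop) (c : M) (lo : Option M) (hi : M) :
    Set (Set M) :=
  {B | (∃ s, B = node C c s) ∧ ¬ IsLeafSet B ∧
    (∀ p ∈ lo, B ⊂ node C c p) ∧ node C c hi ⊂ B}

/-- `I` is an interval of the branch `br c`. -/
def IsIntervalOn (C : M → M → M → Prop) (c : M) (I : Set (Set M)) : Prop :=
  ∃ (lo : Option M) (hi : M), I = branchInterval C c lo hi

/-- `I` is a bounded interval of `br c` (bounded from below and from above). -/
def IsBoundedInterval (C : M → M → M → Prop) (c : M) (I : Set (Set M)) : Prop :=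
  ∃ p hi : M, I = branchInterval C c (some p) hi ∧ ¬ IsLeafSet (node C c hi)

/-- `I` is an unbounded (i.e. not bounded) interval of `br c`. -/
def IsUnboundedInterval (C : M → M → M → Prop) (c : M) (I : Set (Set M)) :
    Prop :=
  IsIntervalOn C c I ∧ ¬ IsBoundedInterval C c I

/-- The relation on nodes coded by `S ⊆ M²` via `(s,t) ↦ (c ∧ s, d ∧ t)`. -/
def codedRel (C : M → M → M → Prop) (S : Set (Fin 2 → M)) (c d : M)
    (B B' : Set M) : Prop :=
  ∃ s t : M, ![s, t] ∈ S ∧ B = node C c s ∧ B' = node C d t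

/-- `S ⊆ M²` codes a bijection between the set `I` of nodes of `br c` and the
set `J` of nodes of `br d`. -/
def CodesBijectionBetween (C : M → M → M → Prop) (S : Set (Fin 2 → M))
    (c d : M) (I J : Set (Set M)) : Prop :=
  (∀ B B', codedRel C S c d B B' → B ∈ I ∧ B' ∈ J) ∧
  (∀ B ∈ I, ∃! B', B' ∈ J ∧ codedRel C S c d B B') ∧
  (∀ B' ∈ J, ∃! B, B ∈ I ∧ codedRel C S c d B B')

/-- Condition (NB): there is no definable bijection between a bounded interval
and an unbounded interval of branches of the underlying tree. -/
def NB (L : FirstOrder.Language.{u, u}) (M : Type u) [L.Structure M] (r : L.Relations 3) :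
    Prop :=
  ∀ (c d : M) (S : Set (Fin 2 → M)), Set.Definable (univ : Set M) L S →
    ∀ I J : Set (Set M),
      IsBoundedInterval (interpC L M r) c I →
      IsUnboundedInterval (interpC L M r) d J →
      ¬ CodesBijectionBetween (interpC L M r) S c d I J

/-- An infinite group definable in `M`: an infinite definable `G ⊆ Mⁿ`
together with a definable subset of `M^{3n}` which is the graph of a group
operation on `G`. -/
def DefinableInfiniteGroup (L : FirstOrder.Language.{u, u}) (M : Type u)
    [L.Structure M] : Prop :=
  ∃ (n : ℕ) (G : Set (Fin n → M)) (mul : (Fin n → M) → (Fin n → M) → Fin n → M)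
    (one : Fin n → M) (inv : (Fin n → M) → Fin n → M),
    Set.Definable (univ : Set M) L G ∧ G.Infinite ∧
    Set.Definable (univ : Set M) L
      {t : (Fin n ⊕ (Fin n ⊕ Fin n)) → M |
        t ∘ Sum.inl ∈ G ∧ t ∘ Sum.inr ∘ Sum.inl ∈ G ∧
          mul (t ∘ Sum.inl) (t ∘ Sum.inr ∘ Sum.inl) = t ∘ Sum.inr ∘ Sum.inr} ∧
    one ∈ G ∧ (∀ a ∈ G, ∀ b ∈ G, mul a b ∈ G) ∧
    (∀ a ∈ G, ∀ b ∈ G, ∀ c ∈ G, mul (mul a b) c = mul a (mul b c)) ∧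
    (∀ a ∈ G, mul one a = a ∧ mul a one = a) ∧
    (∀ a ∈ G, inv a ∈ G ∧ mul a (inv a) = one ∧ mul (inv a) a = one)

/-- `g` is a C-isomorphism from `A` onto `B`. -/
def CIsoOn (C : M → M → M → Prop) (A B : Set M) (g : M → M) : Prop :=
  Set.BijOn g A B ∧ ∀ x ∈ A, ∀ y ∈ A, ∀ z ∈ A, (C x y z ↔ C (g x) (g y) (g z))

/-- The relation `C_e(f,g,h)`. -/
def CeRel (C : M → M → M → Prop) (V : Set M) (e : M) (f g h : M → M) : Prop :=
  ∃ W : Set M, IsCone C W ∧ e ∈ W ∧ W ⊆ V ∧ ∀ x ∈ W \ {e}, C (f x) (g x) (h x)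

/-- The relation `(¬C)_e(f,g,h)`. -/
def NCeRel (C : M → M → M → Prop) (V : Set M) (e : M) (f g h : M → M) : Prop :=
  ∃ W : Set M, IsCone C W ∧ e ∈ W ∧ W ⊆ V ∧ ∀ x ∈ W \ {e}, ¬ C (f x) (g x) (h x)

/-- A function is definable on `V` if its graph over `V` is definable. -/
def DefinableFunOn (L : FirstOrder.Language.{u, u}) (M : Type u) [L.Structure M]
    (V : Set M) (g : M → M) : Prop :=
  Set.Definable (univ : Set M) L {t : Fin 2 → M | t 0 ∈ V ∧ g (t 0) = t 1}

/-- A nice family of functions `{f u : u ∈ U}` on the cone `V`, with absorbing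
element `e`. -/
structure NiceFamily (L : FirstOrder.Language.{u, u}) (M : Type u) [L.Structure M]
    (C : M → M → M → Prop) where
  U : Set M
  V : Set M
  e : M
  f : M → M → M
  coneU : IsCone C U
  coneV : IsCone C V
  he : e ∈ V
  definable : Set.Definable (univ : Set M) L
    {t : Fin 3 → M | t 0 ∈ U ∧ t 1 ∈ V ∧ f (t 0) (t 1) = t 2}
  auto : ∀ u ∈ U, CIsoOn C V V (f u)
  fixe : ∀ u ∈ U, f u e = e
  star : ∀ x ∈ V \ {e}, ∃ V' : Set M, V' ⊆ V ∧ IsCone C V' ∧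
    CIsoOn C U V' fun u => f u x

namespace NiceFamily

variable {L : FirstOrder.Language.{u, u}} [L.Structure M] {C : M → M → M → Prop}

/-- `f u` is tangent to `g` relatively to the family. -/
def Tangent (F : NiceFamily L M C) (u : M) (g : M → M) : Prop :=
  u ∈ F.U ∧ ∀ u' ∈ F.U, NCeRel C F.V F.e (F.f u) (F.f u') g

/-- The set `T_g` of indices of tangents to `g`. -/
def Tset (F : NiceFamily L M C) (g : M → M) : Set M := {u | F.Tangent u g}

/-- The set `Γ_{g,u}`. -/
def Gamma (F : NiceFamily L M C) (g : M → M) (u : M) : Set M :=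
  {y | y ∈ F.U ∧ CeRel C F.V F.e (F.f u) (F.f y) g}

/-- `g` is derivable relatively to the family: it has exactly one tangent. -/
def Derivable (F : NiceFamily L M C) (g : M → M) : Prop := ∃! u, F.Tangent u g

/-- `f u` is non-dilating. -/
def NonDilating (F : NiceFamily L M C) (u : M) : Prop :=
  NCeRel C F.V F.e (fun x => F.f u (F.f u x)) (F.f u) id

/-- `u₀` is an identity element for the family. -/
def HasIdentity (F : NiceFamily L M C) (u₀ : M) : Prop :=
  u₀ ∈ F.U ∧ ∀ x ∈ F.V, F.f u₀ x = x

end NiceFamily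

/-- Continuity on `A` with respect to the topology generated by the cones. -/
def ContinuousOnCones (C : M → M → M → Prop) (A : Set M) (g : M → M) : Prop :=
  ∀ x ∈ A, ∀ W : Set M, IsCone C W → g x ∈ W →
    ∃ W' : Set M, IsCone C W' ∧ x ∈ W' ∧ ∀ y ∈ W' ∩ A, g y ∈ W

/-!
For `x ≠ e` in `V`, property `(*)` makes `u ↦ f_u(x)` a C-isomorphism from `U` onto a cone.
Hence comparing `f_v(x)`, `f_u(x)` and `g(x)` amounts to comparing `v`, `u` and `ψ_{F,g}(x)`, and
`ψ_{F,g}` tends to `u` exactly when `C_e(f_v, f_u, g)` holds for every `v ∈ U` other than `u`.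
By C-minimality every definable property is eventually constant near `e`, so `C_e` and `(¬C)_e`
are negations of each other on definable functions. If `u` is the only tangent index and `v ≠ u`,
this yields `w` with `C_e(f_v, f_w, g)`, which with `(¬C)_e(f_u, f_w, g)` gives `C_e(f_v, f_u, g)`.
-/

section CRelation

open Filter

variable {C : M → M → M → Prop}

namespace IsCRelation

theorem ne (hC : IsCRelation C) {x y z : M} (h : C x y z) : x ≠ y := by
  rintro rfl
  exact hC.2.1 _ _ _ h h

theorem swap_iff (hC : IsCRelation C) {x y z : M} : C x y z ↔ C x z y :=
  ⟨hC.1 _ _ _, hC.1 _ _ _⟩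

theorem diag_iff_ne (hC : IsCRelation C) {x y : M} : C x y y ↔ x ≠ y := by
  refine ⟨hC.ne, fun h => ?_⟩
  obtain ⟨z, -, hz⟩ := hC.2.2.2 x y h
  exact (hC.2.2.1 _ _ _ y (hC.1 _ _ _ hz)).resolve_right fun h' => hC.ne (hC.1 _ _ _ h') rfl

theorem congr_left (hC : IsCRelation C) {b c e x : M} (h : C b x e) : C x b c ↔ C e b c := by
  rcases eq_or_ne b c with rfl | _
  · have hxb : x ≠ b := (hC.ne h).symm
    have heb : e ≠ b := (hC.ne (hC.swap_iff.1 h)).symm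
    simp only [hC.diag_iff_ne, hxb, heb, ne_eq, not_false_eq_true]
  obtain ⟨hswap, hasymm, htrans, -⟩ := hC
  grind

theorem congr_middle (hC : IsCRelation C) {b c e x : M} (h : C c x e) :
    C b x c ↔ C b e c := by
  obtain ⟨hswap, hasymm, htrans, -⟩ := hC
  grind

end IsCRelation

namespace IsCone

variable {S T : Set M}

theorem subset_or_subset (hC : IsCRelation C) (hS : IsCone C S) (hT : IsCone C T) {e : M}
    (heS : e ∈ S) (heT : e ∈ T) : S ⊆ T ∨ T ⊆ S := by
  obtain ⟨a, b, -, rfl⟩ := hS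
  obtain ⟨c, d, -, rfl⟩ := hT
  obtain ⟨hswap, hasymm, htrans, -⟩ := hC
  by_contra! h
  simp only [Set.not_subset, mem_ofPred_eq] at heS heT h
  obtain ⟨⟨x, hxS, hxT⟩, y, hyT, hyS⟩ := h
  grind

theorem mem_of_C (hC : IsCRelation C) (hS : IsCone C S) {p q y : M} (hp : p ∈ S) (hq : q ∈ S)
    (h : C q p y) : y ∈ S := by
  obtain ⟨a, b, -, rfl⟩ := hS
  obtain ⟨hswap, hasymm, htrans, -⟩ := hC
  simp only [mem_ofPred_eq] at *
  grind

theorem exists_mem_ne (hC : IsCRelation C) (hS : IsCone C S) {e : M} (he : e ∈ S) :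
    ∃ x ∈ S, x ≠ e := by
  obtain ⟨a, b, -, rfl⟩ := hS
  obtain ⟨z, hze, hz⟩ := hC.2.2.2 a e (hC.ne he)
  obtain ⟨hswap, hasymm, htrans, -⟩ := hC
  refine ⟨z, ?_, hze⟩
  simp only [mem_ofPred_eq] at *
  grind

end IsCone

/-- The filter of punctured neighbourhoods of `e` in the topology generated by the cones. The
relations `C_e` and `(¬C)_e` and the limit at `e` are statements about this filter. -/
def puncturedNhds (C : M → M → M → Prop) (e : M) : Filter M :=
  @nhdsWithin M (TopologicalSpace.generateFrom {W | IsCone C W}) e {e}ᶜ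

theorem puncturedNhds_eq_iInf (C : M → M → M → Prop) (e : M) :
    puncturedNhds C e = (⨅ W ∈ {W | e ∈ W ∧ IsCone C W}, 𝓟 W) ⊓ 𝓟 {e}ᶜ := by
  let := TopologicalSpace.generateFrom {W | IsCone C W}
  exact congrArg (· ⊓ 𝓟 {e}ᶜ) TopologicalSpace.nhds_generateFrom

namespace IsCone

variable {e : M} {V : Set M}

theorem eventually_mem (hV : IsCone C V) (he : e ∈ V) : ∀ᶠ x in puncturedNhds C e, x ∈ V := by
  rw [puncturedNhds_eq_iInf]
  exact mem_inf_of_left (mem_iInf_of_mem V (mem_iInf_of_mem ⟨he, hV⟩ (mem_principal_self V)))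

theorem hasBasis_puncturedNhds (hC : IsCRelation C) (hV : IsCone C V) (he : e ∈ V) :
    (puncturedNhds C e).HasBasis (fun W => e ∈ W ∧ IsCone C W) (· \ {e}) := by
  rw [puncturedNhds_eq_iInf]
  refine (hasBasis_biInf_principal (s := id) (S := {W | e ∈ W ∧ IsCone C W}) ?_
    ⟨V, he, hV⟩).inf_principal {e}ᶜ
  rintro S ⟨heS, hS⟩ T ⟨heT, hT⟩
  rcases hS.subset_or_subset hC hT heS heT with h | h
  · exact ⟨S, ⟨heS, hS⟩, subset_rfl, h⟩
  · exact ⟨T, ⟨heT, hT⟩, h, subset_rfl⟩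

theorem neBot_puncturedNhds (hC : IsCRelation C) (hV : IsCone C V) (he : e ∈ V) :
    (puncturedNhds C e).NeBot :=
  (hV.hasBasis_puncturedNhds hC he).neBot_iff.2 fun h => h.2.exists_mem_ne hC h.1

theorem eventually_puncturedNhds_iff (hC : IsCRelation C) (hV : IsCone C V) (he : e ∈ V)
    {p : M → Prop} :
    (∀ᶠ x in puncturedNhds C e, p x) ↔
      ∃ W, IsCone C W ∧ e ∈ W ∧ W ⊆ V ∧ ∀ x ∈ W \ {e}, p x := by
  refine ⟨fun h => ?_, fun ⟨W, hW, heW, _, h⟩ =>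
    (hW.hasBasis_puncturedNhds hC heW).eventually_iff.2 ⟨W, ⟨heW, hW⟩, @h⟩⟩
  obtain ⟨W, ⟨heW, hW⟩, h⟩ := (hV.hasBasis_puncturedNhds hC he).eventually_iff.1 h
  rcases hW.subset_or_subset hC hV heW he with hWV | hVW
  · exact ⟨W, hW, heW, hWV, @h⟩
  · exact ⟨V, hV, he, subset_rfl, fun x hx => h (sdiff_subset_sdiff_left hVW hx)⟩

theorem ceRel_iff (hC : IsCRelation C) (hV : IsCone C V) (he : e ∈ V) {f g h : M → M} :
    CeRel C V e f g h ↔ ∀ᶠ x in puncturedNhds C e, C (f x) (g x) (h x) :=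
  (hV.eventually_puncturedNhds_iff hC he).symm

theorem nCeRel_iff (hC : IsCRelation C) (hV : IsCone C V) (he : e ∈ V) {f g h : M → M} :
    NCeRel C V e f g h ↔ ∀ᶠ x in puncturedNhds C e, ¬ C (f x) (g x) (h x) :=
  (hV.eventually_puncturedNhds_iff hC he).symm

end IsCone

namespace IsCRelation

theorem eventually_C (hC : IsCRelation C) {a e : M} (h : a ≠ e) :
    ∀ᶠ x in puncturedNhds C e, C a x e :=
  IsCone.eventually_mem ⟨a, e, h, rfl⟩ (hC.diag_iff_ne.2 h)

theorem eventually_ne (hC : IsCRelation C) (e a : M) : ∀ᶠ x in puncturedNhds C e, x ≠ a := by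
  by_cases h : a = e
  · rw [h, puncturedNhds_eq_iInf]
    exact mem_inf_of_right (mem_principal_self _)
  · exact (hC.eventually_C h).mono fun x hx => (hC.ne hx).symm

theorem eventuallyConst_eq (hC : IsCRelation C) (e a : M) :
    EventuallyConst (fun x => x = a) (puncturedNhds C e) :=
  eventuallyConst_pred.2 (.inr (hC.eventually_ne e a))

theorem eventuallyConst_C_left (hC : IsCRelation C) (e b c : M) :
    EventuallyConst (fun x => C x b c) (puncturedNhds C e) := by
  by_cases hbc : b = c
  · simp only [hbc, hC.diag_iff_ne]
    exact (hC.eventuallyConst_eq e c).comp Not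
  wlog hb : b ≠ e generalizing b c
  · simp only [hC.swap_iff (y := b)]
    exact this c b (Ne.symm hbc) fun hc => hbc (by rw [not_not.1 hb, hc])
  · exact (EventuallyConst.const (C e b c)).congr
      ((hC.eventually_C hb).mono fun x hx => propext (hC.congr_left hx).symm)

theorem eventuallyConst_C_middle (hC : IsCRelation C) (e b c : M) :
    EventuallyConst (fun x => C b x c) (puncturedNhds C e) := by
  by_cases hc : c = e
  · by_cases hb : b = e
    · exact eventuallyConst_pred.2 (.inr (.of_forall fun x hx =>
        hC.ne (hC.1 _ _ _ hx) (hb.trans hc.symm)))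
    · exact eventuallyConst_pred.2 (.inl (by simpa only [hc] using hC.eventually_C hb))
  · exact (EventuallyConst.const (C b e c)).congr
      ((hC.eventually_C hc).mono fun x hx => propext (hC.congr_middle hx).symm)

end IsCRelation

theorem QFDef.eventuallyConst (hC : IsCRelation C) (e : M) {S : Set M} (hS : QFDef C S) :
    EventuallyConst (· ∈ S) (puncturedNhds C e) := by
  have not_C_self_left : ∀ x y, ¬ C x x y := fun x y h => hC.ne h rfl
  have not_C_self_right : ∀ x y, ¬ C x y x := fun x y h => hC.ne (hC.1 _ _ _ h) rfl
  induction hS with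
  | atomC t₁ t₂ t₃ =>
    rcases t₁ with _ | a <;> rcases t₂ with _ | b <;> rcases t₃ with _ | c <;>
      simp only [Option.getD_none, Option.getD_some, mem_ofPred_eq, not_C_self_left,
        not_C_self_right]
    iterate 3 exact EventuallyConst.const _
    · exact hC.eventuallyConst_C_left e b c
    · simp only [hC.diag_iff_ne, ne_comm (a := a)]
      exact (hC.eventuallyConst_eq e a).comp Not
    · exact hC.eventuallyConst_C_middle e a c
    · simp only [hC.swap_iff (y := b)]
      exact hC.eventuallyConst_C_middle e a b
    · exact EventuallyConst.const _
  | atomEq t₁ t₂ =>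
    rcases t₁ with _ | a <;> rcases t₂ with _ | b <;>
      simp only [Option.getD_none, Option.getD_some, mem_ofPred_eq]
    · exact EventuallyConst.const _
    · exact hC.eventuallyConst_eq e b
    · simp only [eq_comm (a := a)]
      exact hC.eventuallyConst_eq e a
    · exact EventuallyConst.const _
  | compl _ ih => exact ih.comp Not
  | union _ _ ihS ihT => exact ihS.comp₂ Or ihT

end CRelation

section Definability

open Filter FirstOrder.Language

variable {L : FirstOrder.Language.{u, u}} [L.Structure M]

theorem definable_interpC (r : L.Relations 3) :
    (univ : Set M).Definable L {t : Fin 3 → M | interpC L M r (t 0) (t 1) (t 2)} := by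
  refine (empty_definable_iff.2 ⟨r.formula ![.var 0, .var 1, .var 2], ?_⟩).mono
    (empty_subset univ)
  ext t
  simp only [mem_ofPred_eq, interpC, Formula.realize_rel]
  congr! 1
  ext i
  fin_cases i <;> rfl

theorem DefinableFunOn.definable₁_setOf_mem {ι : Type*} [Finite ι] [Nonempty ι] {V : Set M}
    {f : ι → M → M} (hf : ∀ i, DefinableFunOn L M V (f i)) {R : Set (ι → M)}
    (hR : (univ : Set M).Definable L R) :
    (univ : Set M).Definable₁ L {x | x ∈ V ∧ (fun i => f i x) ∈ R} := by
  have hgraph : (univ : Set M).Definable L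
      {t : Fin 1 ⊕ ι → M | ∀ i, t (.inl 0) ∈ V ∧ f i (t (.inl 0)) = t (.inr i)} := by
    rw [ofPred_forall]
    exact definable_iInter_of_finite fun i =>
      Set.Definable.preimage_comp (![.inl 0, .inr i] : Fin 2 → Fin 1 ⊕ ι) (hf i)
  unfold Definable₁
  convert! (hgraph.inter (hR.preimage_comp Sum.inr)).exists_of_finite using 1
  ext x
  simp only [mem_ofPred_eq, mem_inter_iff, mem_preimage, Sum.elim_inl, Sum.elim_inr, forall_and,
    forall_const, ← funext_iff, Sum.elim_comp_inr]
  exact ⟨fun ⟨hxV, hxR⟩ => ⟨_, ⟨hxV, rfl⟩, hxR⟩, fun ⟨_, ⟨hxV, hxu⟩, hxR⟩ => ⟨hxV, hxu ▸ hxR⟩⟩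

theorem IsCone.ceRel_or_nCeRel {C : M → M → M → Prop} (hC : IsCRelation C)
    (hCdef : (univ : Set M).Definable L {t : Fin 3 → M | C (t 0) (t 1) (t 2)})
    (hmin : ∀ S : Set M, (univ : Set M).Definable₁ L S → QFDef C S) {V : Set M} (hV : IsCone C V)
    {e : M} (he : e ∈ V) {f g h : M → M} (hf : DefinableFunOn L M V f)
    (hg : DefinableFunOn L M V g) (hh : DefinableFunOn L M V h) :
    CeRel C V e f g h ∨ NCeRel C V e f g h := by
  have hfgh : ∀ i, DefinableFunOn L M V (![f, g, h] i) := by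
    intro i
    fin_cases i <;> assumption
  have hconst := (hmin _ (DefinableFunOn.definable₁_setOf_mem hfgh hCdef)).eventuallyConst hC e
  rw [hV.ceRel_iff hC he, hV.nCeRel_iff hC he]
  refine (eventuallyConst_pred.1 hconst).imp (fun h => h.mono fun x hx => hx.2) fun h => ?_
  filter_upwards [h, hV.eventually_mem he] with x hx hxV hxC
  exact hx ⟨hxV, hxC⟩

end Definability

namespace NiceFamily

open Filter

variable {L : FirstOrder.Language.{u, u}} [L.Structure M] {C : M → M → M → Prop}
  {F : NiceFamily L M C} {g : M → M}

theorem definableFunOn (F : NiceFamily L M C) {u : M} (hu : u ∈ F.U) :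
    DefinableFunOn L M F.V (F.f u) := by
  have hmap : (univ : Set M).DefinableMap L fun t : Fin 2 → M => ![u, t 0, t 1] := by
    intro i
    fin_cases i
    · exact Language.definableFun_const L (Fin 2) (mem_univ u)
    · exact .proj L
    · exact .proj L
  simpa [DefinableFunOn, hu] using! F.definable.preimage_map hmap

theorem C_apply_iff (F : NiceFamily L M C) {x : M} (hx : x ∈ F.V \ {F.e}) {u v w : M}
    (hu : u ∈ F.U) (hv : v ∈ F.U) (hw : w ∈ F.U) :
    C (F.f u x) (F.f v x) (F.f w x) ↔ C u v w := by
  obtain ⟨V', -, -, hiso⟩ := F.star x hx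
  exact (hiso.2 u hu v hv w hw).symm

theorem injOn_apply (F : NiceFamily L M C) {x : M} (hx : x ∈ F.V \ {F.e}) :
    InjOn (fun u => F.f u x) F.U := by
  obtain ⟨V', -, -, hiso⟩ := F.star x hx
  exact hiso.1.injOn

theorem exists_apply_eq_of_C (hC : IsCRelation C) (F : NiceFamily L M C) {x : M}
    (hx : x ∈ F.V \ {F.e}) {u v y : M} (hu : u ∈ F.U) (hv : v ∈ F.U)
    (h : C (F.f v x) (F.f u x) y) : ∃ w ∈ F.U, F.f w x = y := by
  obtain ⟨V', -, hV', hiso⟩ := F.star x hx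
  exact hiso.1.surjOn (hV'.mem_of_C hC (hiso.1.mapsTo hu) (hiso.1.mapsTo hv) h)

theorem eventually_mem (F : NiceFamily L M C) (hC : IsCRelation C) :
    ∀ᶠ x in puncturedNhds C F.e, x ∈ F.V \ {F.e} :=
  (F.coneV.eventually_mem F.he).and (hC.eventually_ne F.e F.e)

/-- `lim_{x → e} ψ_{F,g}(x) = u₁`. The partial function `ψ_{F,g}` is not named: that
`ψ_{F,g}(x)` is defined with value `u` means that `u` is the unique index with `f_u(x) = g(x)`. -/
def PsiTendsTo (F : NiceFamily L M C) (g : M → M) (u₁ : M) : Prop :=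
  ∀ A : Set M, IsCone C A → u₁ ∈ A → ∀ᶠ x in puncturedNhds C F.e,
    ∃ u : M, u ∈ F.U ∧ u ∈ A ∧ F.f u x = g x ∧ ∀ u' ∈ F.U, F.f u' x = g x → u' = u

theorem PsiTendsTo.ceRel (hC : IsCRelation C) {u v : M} (h : F.PsiTendsTo g u)
    (hu : u ∈ F.U) (hv : v ∈ F.U) (hvu : v ≠ u) :
    CeRel C F.V F.e (F.f v) (F.f u) g := by
  rw [F.coneV.ceRel_iff hC F.he]
  filter_upwards [F.eventually_mem hC, h {w | C v w u} ⟨v, u, hvu, rfl⟩ (hC.diag_iff_ne.2 hvu)]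
    with x hx ⟨w, hwU, hvwu, hwx, _⟩
  rw [← hwx, F.C_apply_iff hx hv hu hwU]
  exact hC.1 _ _ _ hvwu

theorem psiTendsTo_of_forall_ceRel (hC : IsCRelation C) {u : M} (hu : u ∈ F.U)
    (h : ∀ v ∈ F.U, v ≠ u → CeRel C F.V F.e (F.f v) (F.f u) g) : F.PsiTendsTo g u := by
  intro A hA huA
  have := F.coneU.neBot_puncturedNhds hC hu
  obtain ⟨v, hvA, hvU, hvu⟩ :=
    ((hA.eventually_mem huA).and ((F.coneU.eventually_mem hu).and (hC.eventually_ne u u))).exists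
  filter_upwards [F.eventually_mem hC, (F.coneV.ceRel_iff hC F.he).1 (h v hvU hvu)] with x hx hvx
  obtain ⟨w, hwU, hwx⟩ := F.exists_apply_eq_of_C hC hx hu hvU hvx
  rw [← hwx, F.C_apply_iff hx hvU hu hwU] at hvx
  exact ⟨w, hwU, hA.mem_of_C hC huA hvA hvx, hwx,
    fun u' hu' hu'x => F.injOn_apply hx hu' hwU (hu'x.trans hwx.symm)⟩

theorem PsiTendsTo.eventually_existsUnique {u : M} (h : F.PsiTendsTo g u) (hu : u ∈ F.U) :
    ∀ᶠ x in puncturedNhds C F.e, ∃! v, v ∈ F.U ∧ F.f v x = g x :=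
  (h F.U F.coneU hu).mono fun _ ⟨v, hvU, _, hvx, huniq⟩ =>
    ⟨v, ⟨hvU, hvx⟩, fun w hw => huniq w hw.1 hw.2⟩

theorem PsiTendsTo.tangent (hC : IsCRelation C) {u : M} (h : F.PsiTendsTo g u) (hu : u ∈ F.U) :
    F.Tangent u g := by
  refine ⟨hu, fun v hv => (F.coneV.nCeRel_iff hC F.he).2 ?_⟩
  by_cases hvu : v = u
  · exact .of_forall fun x hx => hC.ne hx (by rw [hvu])
  · exact ((F.coneV.ceRel_iff hC F.he).1 (h.ceRel hC hu hv hvu)).mono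
      fun x hx => hC.2.1 _ _ _ hx

theorem PsiTendsTo.eq_of_tangent (hC : IsCRelation C) {u v : M} (h : F.PsiTendsTo g u)
    (hu : u ∈ F.U) (hv : F.Tangent v g) : v = u := by
  by_contra hvu
  have := F.coneV.neBot_puncturedNhds hC F.he
  obtain ⟨x, hx, hx'⟩ := (((F.coneV.ceRel_iff hC F.he).1 (h.ceRel hC hu hv.1 hvu)).and
    ((F.coneV.nCeRel_iff hC F.he).1 (hv.2 u hu))).exists
  exact hx' hx

theorem PsiTendsTo.derivable (hC : IsCRelation C) {u : M} (h : F.PsiTendsTo g u)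
    (hu : u ∈ F.U) : F.Derivable g :=
  ⟨u, h.tangent hC hu, fun _ => h.eq_of_tangent hC hu⟩

variable (hC : IsCRelation C)
  (hCdef : (univ : Set M).Definable L {t : Fin 3 → M | C (t 0) (t 1) (t 2)})
  (hmin : ∀ S : Set M, (univ : Set M).Definable₁ L S → QFDef C S)
  (hg : DefinableFunOn L M F.V g)

include hC hCdef hmin hg

theorem Tangent.ceRel_of_not_tangent {u v : M} (hu : F.Tangent u g) (hv : v ∈ F.U)
    (hvg : ¬ F.Tangent v g) : CeRel C F.V F.e (F.f v) (F.f u) g := by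
  obtain ⟨w, hw, hvw⟩ : ∃ w ∈ F.U, ¬ NCeRel C F.V F.e (F.f v) (F.f w) g := by
    by_contra! h
    exact hvg ⟨hv, h⟩
  have hvw := (F.coneV.ceRel_or_nCeRel hC hCdef hmin F.he (F.definableFunOn hv)
    (F.definableFunOn hw) hg).resolve_right hvw
  rw [F.coneV.ceRel_iff hC F.he] at hvw ⊢
  filter_upwards [hvw, (F.coneV.nCeRel_iff hC F.he).1 (hu.2 w hw)] with x hvwx huwx
  exact (hC.2.2.1 _ _ _ (F.f u x) hvwx).resolve_right huwx

theorem Derivable.psiTendsTo (hder : F.Derivable g) {u : M} (hu : F.Tangent u g) :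
    F.PsiTendsTo g u :=
  psiTendsTo_of_forall_ceRel hC hu.1 fun _ hv hvu =>
    hu.ceRel_of_not_tangent hC hCdef hmin hg hv fun hvg => hvu (hder.unique hvg hu)

theorem derivable_and_tangent_iff_psiTendsTo {u : M} (hu : u ∈ F.U) :
    F.Derivable g ∧ F.Tangent u g ↔ F.PsiTendsTo g u :=
  ⟨fun ⟨hder, h⟩ => hder.psiTendsTo hC hCdef hmin hg h,
    fun h => ⟨h.derivable hC hu, h.tangent hC hu⟩⟩

end NiceFamily

theorem statement14_general {L : FirstOrder.Language.{u, u}} {M : Type u}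
    [L.Structure M] (r : L.Relations 3)
    (hC : IsCRelation (interpC L M r))
    (hmin : ∀ S : Set M, (univ : Set M).Definable₁ L S → QFDef (interpC L M r) S)
    (F : NiceFamily L M (interpC L M r))
    (g : M → M) (hg : DefinableFunOn L M F.V g) :
    (F.Derivable g → ∃ W : Set M, IsCone (interpC L M r) W ∧ F.e ∈ W ∧ W ⊆ F.V ∧
      ∀ x ∈ W \ {F.e}, ∃! u : M, u ∈ F.U ∧ F.f u x = g x) ∧
    (∀ u₁ ∈ F.U, (F.Derivable g ∧ F.Tangent u₁ g ↔
      ∀ A : Set M, IsCone (interpC L M r) A → u₁ ∈ A →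
        ∃ W : Set M, IsCone (interpC L M r) W ∧ F.e ∈ W ∧ W ⊆ F.V ∧
          ∀ x ∈ W \ {F.e}, ∃ u : M, u ∈ F.U ∧ u ∈ A ∧ F.f u x = g x ∧
            ∀ u' ∈ F.U, F.f u' x = g x → u' = u)) := by
  simp only [← F.coneV.eventually_puncturedNhds_iff hC F.he]
  have hlim := fun u₁ (hu₁ : u₁ ∈ F.U) =>
    NiceFamily.derivable_and_tangent_iff_psiTendsTo hC (definable_interpC r) hmin hg hu₁
  refine ⟨fun hder => ?_, hlim⟩
  obtain ⟨u, hu⟩ := hder.exists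
  exact ((hlim u hu.1).1 ⟨hder, hu⟩).eventually_existsUnique hu.1

theorem statement14 {L : FirstOrder.Language.{u, u}} {M : Type u}
    [L.Structure M] (r : L.Relations 3)
    (hC : IsCRelation (interpC L M r))
    (hmin : CMinimal L M r)
    (hmax : DefinablyMaximal L M r)
    (F : NiceFamily L M (interpC L M r))
    (g : M → M) (hg : DefinableFunOn L M F.V g)
    (hgV : Set.MapsTo g F.V F.V) (hge : g F.e = F.e)
    (hder : F.Derivable g) :
    (∃ W : Set M, IsCone (interpC L M r) W ∧ F.e ∈ W ∧ W ⊆ F.V ∧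
      ∀ x ∈ W \ {F.e}, ∃! u : M, u ∈ F.U ∧ F.f u x = g x) ∧
    (∀ u₁ ∈ F.U, (F.Tangent u₁ g ↔
      ∀ A : Set M, IsCone (interpC L M r) A → u₁ ∈ A →
        ∃ W : Set M, IsCone (interpC L M r) W ∧ F.e ∈ W ∧ W ⊆ F.V ∧
          ∀ x ∈ W \ {F.e}, ∃ u : M, u ∈ F.U ∧ u ∈ A ∧ F.f u x = g x ∧
            ∀ u' ∈ F.U, F.f u' x = g x → u' = u)) :=
  (statement14_general r hC (hmin M inferInstance rfl) F g hg).imp (· hder)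
    fun hlim u₁ hu₁ => (and_iff_right hder).symm.trans (hlim u₁ hu₁)

end CMinPaper
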